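/- Let n > m+3 ≥ 5. The stabilizer in S(n) of the ordered normal simplex ∇₁^{n-m-3} = (e_{(1,...,m-1);m,m+1,m+2,s})_{s=m+3}^n (i.e., the set of σ ∈ S(n) with σ·e_{(1,...,m-1);m,m+1,m+2,s} = e_{(1,...,m-1);m,m+1,m+2,s} for all s = m+3,...,n) equals the subgroup S({1,...,m-1}) ⊂ S(n) of permutations fixing m, m+1, ..., n pointwise. -/

import Mathlib

/-- The affine determinant `d_{a_1,...,a_{m+1}}(q)` for points `q_i ∈ ℂ^m`. -/
noncomputable def dA {n m : ℕ} (q : Fin n → Fin m → ℂ) (a : Fin (m + 1) → Fin n) : ℂ :=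
  (Matrix.of (fun r c : Fin (m + 1) => Fin.snoc (q (a r)) (1 : ℂ) c)).det

/-- `q ∈ ℰⁿ(ℂ^m, gp)`: no `m+1` of the points lie on an affine hyperplane. -/
def GenPos {n m : ℕ} (q : Fin n → Fin m → ℂ) : Prop :=
  ∀ a : Fin (m + 1) → Fin n, Function.Injective a → dA q a ≠ 0

/-- The determinant cross ratio `e_{𝐢;j,k,l,s}` for points in `ℂ^{M+1}`,
where `𝐢` has `M` entries. -/
noncomputable def ecr {n M : ℕ} (q : Fin n → Fin (M + 1) → ℂ) (i : Fin M → Fin n)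
    (j k l s : Fin n) : ℂ :=
  (dA q (Fin.snoc (Fin.snoc i j) k) * dA q (Fin.snoc (Fin.snoc i l) s)) /
  (dA q (Fin.snoc (Fin.snoc i j) l) * dA q (Fin.snoc (Fin.snoc i k) s))

/-!
Clearing denominators, an equality of two cross ratios becomes an equality of products of four
determinants, which extends from the configurations in general position to their closure.  For each
set `B` of `m + 1` indices the closure contains a configuration at which `d_a` vanishes exactly for
the tuples `a` that enumerate `B`: take points on the curve `(z ^ (m + 1), z, …, z ^ (m - 1))`,
where `d_a` is a Vandermonde determinant times the sum of the parameters.  Evaluating there shows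
that equal cross ratios `e_{𝐢;j,k,l,s}` have the same unordered pairs of index sets
`{𝐢jk, 𝐢ls}` and `{𝐢jl, 𝐢ks}`, hence the same set `𝐢` and the same `(j, k, l, s)` up to the Klein
four-group.  Two distinct last indices `t` rule out every nontrivial Klein permutation.
-/

open Filter Topology Function Matrix

section Vandermonde

variable {R : Type*} [CommRing R] {m : ℕ}

theorem pow_succ_eq_vandermonde_mulVec (v : Fin (m + 1) → R) :
    (fun r => v r ^ (m + 1)) =
      vandermonde v *ᵥ fun c => -(∏ r, (Polynomial.X - Polynomial.C (v r))).coeff c := by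
  nontriviality R
  set Q : Polynomial R := ∏ r, (Polynomial.X - Polynomial.C (v r)) with hQ
  have hmonic : Q.Monic := Polynomial.monic_prod_X_sub_C v Finset.univ
  have hdeg : Q.natDegree = m + 1 := by simp [hQ]
  ext r
  have hroot : Q.eval (v r) = 0 := by
    rw [hQ, Polynomial.eval_prod]
    exact Finset.prod_eq_zero (Finset.mem_univ r) (by simp)
  rw [Polynomial.eval_eq_sum_range, hdeg, Finset.sum_range_succ, ← hdeg, hmonic.coeff_natDegree,
    hdeg, one_mul, Finset.sum_range] at hroot
  rw [eq_neg_of_add_eq_zero_right hroot]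
  simp [mulVec, dotProduct, vandermonde_apply, mul_comm]

theorem det_vandermonde_updateCol_last (v : Fin (m + 1) → R) :
    ((vandermonde v).updateCol (Fin.last m) fun r => v r ^ (m + 1)).det =
      (∑ r, v r) * (vandermonde v).det := by
  nontriviality R
  have hcoeff := Polynomial.prod_X_sub_C_coeff_card_pred Finset.univ v (by simp)
  rw [Finset.card_univ, Fintype.card_fin, Nat.add_sub_cancel] at hcoeff
  rw [← cramer_apply, pow_succ_eq_vandermonde_mulVec, cramer_eq_adjugate_mulVec, mulVec_mulVec,
    adjugate_mul, smul_mulVec, one_mulVec, Pi.smul_apply, Fin.val_last, hcoeff, neg_neg,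
    smul_eq_mul, mul_comm]

end Vandermonde

section Degeneration

variable {n m M : ℕ}

@[fun_prop]
theorem continuous_dA (a : Fin (m + 1) → Fin n) :
    Continuous fun q : Fin n → Fin m → ℂ => dA q a := by
  refine Continuous.matrix_det (continuous_matrix fun r c => ?_)
  induction c using Fin.lastCases with
  | last => simpa using continuous_const
  | cast c => simpa using by fun_prop

/-- The configuration of the points `(z ^ (M + 2), z, z ^ 2, …, z ^ M)` of `ℂ^(M+1)`, with
parameters `z = t x`.  Skipping the exponent `M + 1` makes `M + 2` points of the curve lie on a
hyperplane exactly when their parameters sum to zero. -/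
def gapCurve (M : ℕ) (t : Fin n → ℂ) : Fin n → Fin (M + 1) → ℂ :=
  fun x c => t x ^ if c = 0 then M + 2 else (c : ℕ)

theorem dA_gapCurve (t : Fin n → ℂ) (a : Fin (M + 2) → Fin n) :
    dA (gapCurve M t) a = -((∑ r, t (a r)) * (vandermonde (t ∘ a)).det) := by
  have hmatrix : (of fun r c => Fin.snoc (gapCurve M t (a r)) (1 : ℂ) c) =
      ((vandermonde (t ∘ a)).updateCol (Fin.last (M + 1)) fun r => (t ∘ a) r ^ (M + 2)).submatrix
        id (Equiv.swap 0 (Fin.last (M + 1))) := by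
    ext r c
    induction c using Fin.lastCases with
    | last => simp [vandermonde_apply]
    | cast c =>
      by_cases hc : c = 0
      · simp [hc, gapCurve]
      · rw [submatrix_apply, Equiv.swap_apply_of_ne_of_ne (by simpa using hc) c.castSucc_ne_last]
        simp [hc, gapCurve, vandermonde_apply]
  rw [dA, hmatrix, det_permute', det_vandermonde_updateCol_last,
    Equiv.Perm.sign_swap (Fin.last_pos).ne]
  simp

theorem dA_gapCurve_eq_zero_iff {t : Fin n → ℂ} (ht : Injective t) {a : Fin (M + 2) → Fin n}
    (ha : Injective a) : dA (gapCurve M t) a = 0 ↔ ∑ r, t (a r) = 0 := by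
  have hV := det_vandermonde_ne_zero_iff.mpr (ht.comp ha)
  rw [dA_gapCurve, neg_eq_zero, mul_eq_zero, or_iff_left hV]

theorem gapCurve_mem_closure_genPos {t : Fin n → ℂ} (ht : Injective t) :
    gapCurve M t ∈ closure {q | GenPos q} := by
  let shifted : ℂ → Fin n → Fin (M + 1) → ℂ := fun ε => gapCurve M fun x => t x + ε
  have hlim : Tendsto shifted (𝓝[≠] 0) (𝓝 (gapCurve M t)) := by
    have hcont : Continuous shifted := by unfold shifted gapCurve; fun_prop
    simpa [shifted] using (hcont.tendsto 0).mono_left nhdsWithin_le_nhds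
  refine mem_closure_of_tendsto hlim ?_
  simp only [Set.mem_ofPred_eq, GenPos, eventually_all]
  intro a ha
  have hne : ∀ᶠ ε in 𝓝[≠] (0 : ℂ), ε ≠ -(∑ r, t (a r)) / (M + 2) :=
    nhdsNE_le_cofinite 0 (Set.finite_singleton _).eventually_cofinite_notMem
  filter_upwards [hne] with ε hε hdet
  rw [dA_gapCurve_eq_zero_iff (by simpa [Injective] using ht) ha] at hdet
  have hM : (M : ℂ) + 2 ≠ 0 := by exact_mod_cast (M + 1).succ_ne_zero
  refine hε ((eq_div_iff hM).mpr ?_)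
  simp only [Finset.sum_add_distrib, Finset.sum_const, Finset.card_univ, Fintype.card_fin,
    nsmul_eq_mul, Nat.cast_add, Nat.cast_ofNat] at hdet
  linear_combination hdet

theorem sum_two_pow_eq_iff_range_eq {ι : Type*} [Fintype ι] {a b : ι → Fin n}
    (ha : Injective a) (hb : Injective b) :
    ∑ r, 2 ^ (a r : ℕ) = ∑ r, 2 ^ (b r : ℕ) ↔ Set.range a = Set.range b := by
  classical
  have hsum {c : ι → Fin n} (hc : Injective c) :
      ∑ r, 2 ^ (c r : ℕ) = ∑ x ∈ (Finset.univ.image c).image Fin.val, 2 ^ x := by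
    rw [Finset.sum_image Fin.val_injective.injOn, Finset.sum_image hc.injOn]
  rw [hsum ha, hsum hb, (Finset.geomSum_injective le_rfl).eq_iff,
    (Finset.image_injective Fin.val_injective).eq_iff, ← Finset.coe_inj]
  simp only [Finset.coe_image, Finset.coe_univ, Set.image_univ]

theorem exists_injective_sum_eq_zero_iff_range_eq {ι : Type*} [Fintype ι] [Nonempty ι]
    {b : ι → Fin n} (hb : Injective b) :
    ∃ t : Fin n → ℂ, Injective t ∧
      ∀ a : ι → Fin n, Injective a → (∑ r, t (a r) = 0 ↔ Set.range a = Set.range b) := by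
  have hcard : (Fintype.card ι : ℂ) ≠ 0 := by simp
  let t : Fin n → ℂ := fun x => Fintype.card ι * 2 ^ (x : ℕ) - ∑ r, 2 ^ (b r : ℕ)
  refine ⟨t, fun x y hxy => ?_, fun a ha => ?_⟩
  · have hpow : (2 : ℂ) ^ (x : ℕ) = 2 ^ (y : ℕ) :=
      mul_left_cancel₀ hcard (sub_left_injective hxy)
    exact Fin.ext (Nat.pow_right_injective le_rfl (by exact_mod_cast hpow))
  · have hsum : ∑ r, t (a r) =
        Fintype.card ι * (∑ r, 2 ^ (a r : ℕ) - ∑ r, 2 ^ (b r : ℕ) : ℂ) := by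
      simp [t, Finset.sum_sub_distrib, Finset.mul_sum, mul_sub]
    rw [hsum, mul_eq_zero, or_iff_right hcard, sub_eq_zero, ← sum_two_pow_eq_iff_range_eq ha hb]
    norm_cast

theorem exists_mem_closure_genPos_dA_eq_zero_iff {b : Fin (M + 2) → Fin n} (hb : Injective b) :
    ∃ q ∈ closure {q : Fin n → Fin (M + 1) → ℂ | GenPos q},
      ∀ a, Injective a → (dA q a = 0 ↔ Set.range a = Set.range b) := by
  obtain ⟨t, ht, hsum⟩ := exists_injective_sum_eq_zero_iff_range_eq hb
  exact ⟨gapCurve M t, gapCurve_mem_closure_genPos ht, fun a ha =>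
    (dA_gapCurve_eq_zero_iff ht ha).trans (hsum a ha)⟩

end Degeneration

section Admissible

variable {α : Type*} {M : ℕ} {i i' : Fin M → α} {j k l s j' k' l' s' : α}

/-- The index tuple `(𝐢, j, k)` of the determinant `d_{𝐢,j,k}`. -/
abbrev snocPair (i : Fin M → α) (j k : α) : Fin (M + 2) → α :=
  Fin.snoc (Fin.snoc i j : Fin (M + 1) → α) k

theorem range_snocPair (i : Fin M → α) (j k : α) :
    Set.range (snocPair i j k) = {j, k} ∪ Set.range i := by
  rw [Fin.range_snoc, Fin.range_snoc, Set.insert_comm, Set.insert_union, Set.singleton_union]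

theorem snocPair_comp_swap (i : Fin M → α) (j k : α) :
    snocPair i j k ∘ Equiv.swap (Fin.last M).castSucc (Fin.last (M + 1)) = snocPair i k j := by
  ext r
  induction r using Fin.lastCases with
  | last => simp
  | cast r =>
    induction r using Fin.lastCases with
    | last => simp
    | cast r =>
      rw [Function.comp_apply, Equiv.swap_apply_of_ne_of_ne (by simp) (Fin.castSucc_ne_last _)]
      simp

theorem snoc_comp_perm (i : Fin M → α) (x : α) (τ : Equiv.Perm (Fin M)) :
    (Fin.snoc (i ∘ τ) x : Fin (M + 1) → α) =
      Fin.snoc i x ∘ τ.viaFintypeEmbedding Fin.castSuccEmb := by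
  ext r
  induction r using Fin.lastCases with
  | last =>
    rw [Function.comp_apply, Equiv.Perm.viaFintypeEmbedding_apply_notMem_range] <;> simp
  | cast r =>
    have hr := τ.viaFintypeEmbedding_apply_image Fin.castSuccEmb r
    simp only [Fin.coe_castSuccEmb] at hr
    simp [hr]

theorem exists_perm_eq_comp_of_range_eq {ι : Type*} {f g : ι → α} (hf : Injective f)
    (hg : Injective g) (h : Set.range f = Set.range g) : ∃ τ : Equiv.Perm ι, f = g ∘ τ :=
  ⟨(Equiv.ofInjective f hf).trans ((Equiv.setCongr h).trans (Equiv.ofInjective g hg).symm), by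
    ext x
    simp [Equiv.apply_ofInjective_symm]⟩

/-- The indices of a determinant cross ratio `e_{𝐢;j,k,l,s}`: the entries of `𝐢` together with
`j, k, l, s` are pairwise distinct. -/
structure Admissible (i : Fin M → α) (j k l s : α) : Prop where
  injective : Injective i
  nodup : [j, k, l, s].Nodup
  notMem_range : ∀ x ∈ [j, k, l, s], x ∉ Set.range i

/-- The orbit of `(j, k, l, s)` under the Klein four-group of double transpositions of the
positions. -/
def kleinOrbit (j k l s : α) : Set (α × α × α × α) :=
  {(j, k, l, s), (k, j, s, l), (l, s, j, k), (s, l, k, j)}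

theorem mem_kleinOrbit_of_pair_eq
    (hjk_ls : (({j', k'} : Set α) = {j, k} ∧ ({l', s'} : Set α) = {l, s}) ∨
      (({j', k'} : Set α) = {l, s} ∧ ({l', s'} : Set α) = {j, k}))
    (hjl_ks : (({j', l'} : Set α) = {j, l} ∧ ({k', s'} : Set α) = {k, s}) ∨
      (({j', l'} : Set α) = {k, s} ∧ ({k', s'} : Set α) = {j, l})) :
    (j', k', l', s') ∈ kleinOrbit j k l s := by
  simp only [Set.pair_eq_pair_iff, kleinOrbit, Set.mem_insert_iff, Set.mem_singleton_iff,
    Prod.mk.injEq] at *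
  grind

-- A nontrivial Klein permutation of `(j, k, l, t)` swaps two of `j, k, l` and sends the third to
-- `t`.  The swapped pair is determined by `σ`, so two values of `t` would give the third index two
-- images.
theorem fixed_of_forall_mem_kleinOrbit {σ : α → α} {T : Set α} (hT : T.Nontrivial)
    (h : ∀ t ∈ T, (σ j, σ k, σ l, σ t) ∈ kleinOrbit j k l t) :
    ∀ x ∈ {j, k, l} ∪ T, σ x = x := by
  have hfix : ∀ t ∈ T, σ j = j ∧ σ k = k ∧ σ l = l ∧ σ t = t := by
    intro t ht
    obtain ⟨t', ht', hne⟩ := hT.exists_ne t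
    have ht_orbit := h t ht
    have ht'_orbit := h t' ht'
    simp only [kleinOrbit, Set.mem_insert_iff, Set.mem_singleton_iff, Prod.mk.injEq] at *
    grind
  obtain ⟨t, ht⟩ := hT.nonempty
  rintro x ((rfl | rfl | rfl) | hx)
  exacts [(hfix t ht).1, (hfix t ht).2.1, (hfix t ht).2.2.1, (hfix x hx).2.2.2]

namespace Admissible

theorem map {β : Type*} {f : α → β} (hf : Injective f) (h : Admissible i j k l s) :
    Admissible (f ∘ i) (f j) (f k) (f l) (f s) where
  injective := hf.comp h.injective
  nodup := h.nodup.map hf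
  notMem_range := by
    have := h.notMem_range
    simp_all [hf.eq_iff]

theorem of_perm (h : Admissible i j k l s) (hp : [j', k', l', s'].Perm [j, k, l, s]) :
    Admissible i j' k' l' s' where
  injective := h.injective
  nodup := hp.nodup_iff.mpr h.nodup
  notMem_range x hx := h.notMem_range x (hp.mem_iff.mp hx)

theorem swap_middle (h : Admissible i j k l s) : Admissible i j l k s :=
  h.of_perm ((List.Perm.swap k l [s]).cons j)

theorem rotate_two (h : Admissible i j k l s) : Admissible i l s j k :=
  h.of_perm (List.perm_append_comm (l₁ := [l, s]))

theorem snocPair_injective (h : Admissible i j k l s) : Injective (snocPair i j k) := by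
  have hd := h.nodup
  have hn := h.notMem_range
  simp only [Fin.snoc_injective_iff, Fin.range_snoc]
  simp_all [h.injective, eq_comm]

theorem range_snocPair_diff (h : Admissible i j k l s) :
    Set.range (snocPair i j k) \ Set.range i = {j, k} := by
  rw [range_snocPair, Set.union_sdiff_right, sdiff_eq_left, Set.disjoint_insert_left,
    Set.disjoint_singleton_left]
  exact ⟨h.notMem_range j (by simp), h.notMem_range k (by simp)⟩

theorem range_snocPair_inter (h : Admissible i j k l s) :
    Set.range (snocPair i j k) ∩ Set.range (snocPair i l s) = Set.range i := by
  have hdisjoint : Disjoint ({j, k} : Set α) {l, s} := by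
    have hd := h.nodup
    simp_all [eq_comm]
  rw [range_snocPair, range_snocPair, ← Set.inter_union_distrib_right, hdisjoint.inter_eq,
    Set.empty_union]

theorem third_notMem_range_snocPair (h : Admissible i j k l s) :
    l ∉ Set.range (snocPair i j k) := by
  have hd := h.nodup
  have hn := h.notMem_range
  simp_all [eq_comm]

theorem fourth_notMem_range_snocPair (h : Admissible i j k l s) :
    s ∉ Set.range (snocPair i j k) := by
  have hd := h.nodup
  have hn := h.notMem_range
  simp_all [eq_comm]

end Admissible

end Admissible

section CrossRatio

variable {n m M : ℕ} {i i' : Fin M → Fin n} {j k l s j' k' l' s' : Fin n}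

theorem dA_comp_perm (q : Fin n → Fin m → ℂ) (a : Fin (m + 1) → Fin n)
    (τ : Equiv.Perm (Fin (m + 1))) : dA q (a ∘ τ) = (Equiv.Perm.sign τ : ℂ) * dA q a := by
  rw [dA, dA, ← det_permute]
  rfl

theorem dA_snocPair_swap (q : Fin n → Fin (M + 1) → ℂ) (i : Fin M → Fin n) (j k : Fin n) :
    dA q (snocPair i k j) = -dA q (snocPair i j k) := by
  rw [← snocPair_comp_swap, dA_comp_perm, Equiv.Perm.sign_swap (Fin.castSucc_ne_last _)]
  simp

theorem dA_snocPair_comp_perm (q : Fin n → Fin (M + 1) → ℂ) (i : Fin M → Fin n) (j k : Fin n)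
    (τ : Equiv.Perm (Fin M)) :
    dA q (snocPair (i ∘ τ) j k) = (Equiv.Perm.sign τ : ℂ) * dA q (snocPair i j k) := by
  rw [snocPair, snoc_comp_perm, snoc_comp_perm, dA_comp_perm, Equiv.Perm.viaFintypeEmbedding_sign,
    Equiv.Perm.viaFintypeEmbedding_sign]

theorem ecr_comp_perm (q : Fin n → Fin (M + 1) → ℂ) (i : Fin M → Fin n) (j k l s : Fin n)
    (τ : Equiv.Perm (Fin M)) : ecr q (i ∘ τ) j k l s = ecr q i j k l s := by
  have hsign : (Equiv.Perm.sign τ : ℂ) * (Equiv.Perm.sign τ : ℂ) ≠ 0 := by simp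
  simp only [ecr, dA_snocPair_comp_perm]
  rw [mul_mul_mul_comm, mul_mul_mul_comm (Equiv.Perm.sign τ : ℂ) _ (Equiv.Perm.sign τ : ℂ),
    mul_div_mul_left _ _ hsign]

theorem ecr_swap_middle (q : Fin n → Fin (M + 1) → ℂ) (i : Fin M → Fin n) (j k l s : Fin n) :
    ecr q i j l k s = (ecr q i j k l s)⁻¹ :=
  (inv_div _ _).symm

theorem ecr_eq_of_mem_kleinOrbit (q : Fin n → Fin (M + 1) → ℂ) (i : Fin M → Fin n)
    (h : (j', k', l', s') ∈ kleinOrbit j k l s) : ecr q i j' k' l' s' = ecr q i j k l s := by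
  simp only [kleinOrbit, Set.mem_insert_iff, Set.mem_singleton_iff, Prod.mk.injEq] at h
  rcases h with ⟨rfl, rfl, rfl, rfl⟩ | ⟨rfl, rfl, rfl, rfl⟩ | ⟨rfl, rfl, rfl, rfl⟩ |
    ⟨rfl, rfl, rfl, rfl⟩
  · rfl
  all_goals
    simp only [ecr, dA_snocPair_swap q i k' j', dA_snocPair_swap q i s' l',
      dA_snocPair_swap q i l' j', dA_snocPair_swap q i s' k', neg_mul_neg, mul_comm]

theorem ecr_rotate_two (q : Fin n → Fin (M + 1) → ℂ) (i : Fin M → Fin n) (j k l s : Fin n) :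
    ecr q i l s j k = ecr q i j k l s :=
  ecr_eq_of_mem_kleinOrbit q i (by simp [kleinOrbit])

theorem range_snocPair_eq_or_of_ecr_eq (hA : Admissible i j k l s)
    (hA' : Admissible i' j' k' l' s')
    (h : ∀ q, GenPos q → ecr q i' j' k' l' s' = ecr q i j k l s) :
    Set.range (snocPair i' j' k') = Set.range (snocPair i j k) ∨
      Set.range (snocPair i' j' k') = Set.range (snocPair i l s) := by
  have hjl := hA.swap_middle.snocPair_injective
  have hks := hA.swap_middle.rotate_two.snocPair_injective
  have hjl' := hA'.swap_middle.snocPair_injective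
  have hks' := hA'.swap_middle.rotate_two.snocPair_injective
  have hcross : Set.EqOn
      (fun q => dA q (snocPair i' j' k') * dA q (snocPair i' l' s') *
        (dA q (snocPair i j l) * dA q (snocPair i k s)))
      (fun q => dA q (snocPair i j k) * dA q (snocPair i l s) *
        (dA q (snocPair i' j' l') * dA q (snocPair i' k' s')))
      (closure {q : Fin n → Fin (M + 1) → ℂ | GenPos q}) := by
    refine Set.EqOn.closure (fun q (hq : GenPos q) => ?_) (by fun_prop) (by fun_prop)
    exact (div_eq_div_iff (mul_ne_zero (hq _ hjl') (hq _ hks'))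
      (mul_ne_zero (hq _ hjl) (hq _ hks))).mp (h q hq)
  obtain ⟨q, hq, hzero⟩ := exists_mem_closure_genPos_dA_eq_zero_iff hA'.snocPair_injective
  have hprod := hcross hq
  simp only [(hzero _ hA'.snocPair_injective).mpr rfl, zero_mul, zero_eq_mul, mul_eq_zero,
    hzero _ hA.snocPair_injective, hzero _ hA.rotate_two.snocPair_injective, hzero _ hjl',
    hzero _ hks'] at hprod
  rcases hprod with (hjk | hls) | (hjl | hks)
  · exact .inl hjk.symm
  · exact .inr hls.symm
  · have hmem : l' ∈ Set.range (snocPair i' j' l') := by simp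
    exact absurd (hjl ▸ hmem) hA'.third_notMem_range_snocPair
  · have hmem : s' ∈ Set.range (snocPair i' k' s') := by simp
    exact absurd (hks ▸ hmem) hA'.fourth_notMem_range_snocPair

theorem range_snocPair_eq_and_eq_or_of_ecr_eq (hA : Admissible i j k l s)
    (hA' : Admissible i' j' k' l' s')
    (h : ∀ q, GenPos q → ecr q i' j' k' l' s' = ecr q i j k l s) :
    (Set.range (snocPair i' j' k') = Set.range (snocPair i j k) ∧
        Set.range (snocPair i' l' s') = Set.range (snocPair i l s)) ∨
      (Set.range (snocPair i' j' k') = Set.range (snocPair i l s) ∧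
        Set.range (snocPair i' l' s') = Set.range (snocPair i j k)) := by
  have hrotate : ∀ q, GenPos q → ecr q i' l' s' j' k' = ecr q i l s j k := fun q hq => by
    rw [ecr_rotate_two q i' j', ecr_rotate_two q i j, h q hq]
  have hne : Set.range (snocPair i' j' k') ≠ Set.range (snocPair i' l' s') := fun heq =>
    hA'.third_notMem_range_snocPair (heq ▸ by simp)
  have hjk := range_snocPair_eq_or_of_ecr_eq hA hA' h
  have hls := range_snocPair_eq_or_of_ecr_eq hA.rotate_two hA'.rotate_two hrotate
  grind

theorem range_eq_of_ecr_eq (hA : Admissible i j k l s) (hA' : Admissible i' j' k' l' s')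
    (h : ∀ q, GenPos q → ecr q i' j' k' l' s' = ecr q i j k l s) :
    Set.range i' = Set.range i := by
  rw [← hA'.range_snocPair_inter, ← hA.range_snocPair_inter]
  rcases range_snocPair_eq_and_eq_or_of_ecr_eq hA hA' h with ⟨hjk, hls⟩ | ⟨hjk, hls⟩
  · rw [hjk, hls]
  · rw [hjk, hls, Set.inter_comm]

theorem pair_eq_and_eq_or_of_ecr_eq (hA : Admissible i j k l s)
    (hA' : Admissible i' j' k' l' s')
    (h : ∀ q, GenPos q → ecr q i' j' k' l' s' = ecr q i j k l s) :
    (({j', k'} : Set (Fin n)) = {j, k} ∧ ({l', s'} : Set (Fin n)) = {l, s}) ∨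
      (({j', k'} : Set (Fin n)) = {l, s} ∧ ({l', s'} : Set (Fin n)) = {j, k}) := by
  rw [← hA'.range_snocPair_diff, ← hA.range_snocPair_diff, ← hA'.rotate_two.range_snocPair_diff,
    ← hA.rotate_two.range_snocPair_diff, range_eq_of_ecr_eq hA hA' h]
  rcases range_snocPair_eq_and_eq_or_of_ecr_eq hA hA' h with ⟨hjk, hls⟩ | ⟨hjk, hls⟩
  · exact .inl ⟨by rw [hjk], by rw [hls]⟩
  · exact .inr ⟨by rw [hjk], by rw [hls]⟩

theorem forall_ecr_eq_iff (hA : Admissible i j k l s) (hA' : Admissible i' j' k' l' s') :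
    (∀ q, GenPos q → ecr q i' j' k' l' s' = ecr q i j k l s) ↔
      Set.range i' = Set.range i ∧ (j', k', l', s') ∈ kleinOrbit j k l s := by
  constructor
  · intro h
    have hjk_ls := pair_eq_and_eq_or_of_ecr_eq hA hA' h
    have hjl_ks := pair_eq_and_eq_or_of_ecr_eq hA.swap_middle hA'.swap_middle fun q hq => by
      rw [ecr_swap_middle q i' j' k', ecr_swap_middle q i j k, h q hq]
    exact ⟨range_eq_of_ecr_eq hA hA' h, mem_kleinOrbit_of_pair_eq hjk_ls hjl_ks⟩
  · rintro ⟨hrange, hklein⟩ q -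
    obtain ⟨τ, rfl⟩ := exists_perm_eq_comp_of_range_eq hA'.injective hA.injective hrange
    rw [ecr_comp_perm, ecr_eq_of_mem_kleinOrbit q i hklein]

end CrossRatio

theorem image_eq_of_forall_compl_fixed {α : Type*} {σ : Equiv.Perm α} {S : Set α}
    (h : ∀ x ∈ Sᶜ, σ x = x) : σ '' S = S := by
  have himage : σ '' Sᶜ = Sᶜ := (Set.EqOn.image_eq h).trans (Set.image_id _)
  rwa [Set.image_compl_eq σ.bijective, compl_inj_iff] at himage

theorem admissible_castLE {n M : ℕ} (hn : M + 3 ≤ n) {t : Fin n} (ht : M + 3 ≤ t.val) :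
    Admissible (Fin.castLE (by omega : M ≤ n)) ⟨M, by omega⟩ ⟨M + 1, by omega⟩ ⟨M + 2, by omega⟩
      t where
  injective := Fin.castLE_injective _
  nodup := by grind
  notMem_range := by grind

theorem nontrivial_setOf_le_val {n N : ℕ} (hn : N + 2 ≤ n) : {t : Fin n | N ≤ t.val}.Nontrivial :=
  ⟨⟨N, by omega⟩, by simp, ⟨N + 1, by omega⟩, by simp, by simp⟩

theorem union_setOf_le_val_eq_compl_range_castLE {n M : ℕ} (hn : M + 3 ≤ n) :
    ({⟨M, by omega⟩, ⟨M + 1, by omega⟩, ⟨M + 2, by omega⟩} : Set (Fin n)) ∪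
      {t | M + 3 ≤ t.val} = (Set.range (Fin.castLE (by omega : M ≤ n)))ᶜ := by
  ext x
  simp only [Fin.range_castLE, Set.mem_union, Set.mem_insert_iff, Set.mem_singleton_iff,
    Fin.ext_iff, Set.mem_compl_iff, Set.mem_ofPred_eq]
  omega

theorem stabilizer_nabla_one_general {n M : ℕ} {i : Fin M → Fin n} {j k l : Fin n}
    {T : Set (Fin n)} (hT : T.Nontrivial) (hA : ∀ t ∈ T, Admissible i j k l t)
    (σ : Equiv.Perm (Fin n)) :
    (∀ t ∈ T, ∀ q, GenPos q → ecr q (σ ∘ i) (σ j) (σ k) (σ l) (σ t) = ecr q i j k l t) ↔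
      σ '' Set.range i = Set.range i ∧ ∀ x ∈ {j, k, l} ∪ T, σ x = x := by
  have hiff : ∀ t ∈ T, _ := fun t ht => forall_ecr_eq_iff (hA t ht) ((hA t ht).map σ.injective)
  rw [forall₂_congr hiff, ← Set.range_comp]
  constructor
  · intro h
    obtain ⟨t, ht⟩ := hT.nonempty
    exact ⟨(h t ht).1, fixed_of_forall_mem_kleinOrbit hT fun t ht => (h t ht).2⟩
  · rintro ⟨hrange, hfix⟩ t ht
    refine ⟨hrange, ?_⟩
    simp_all [kleinOrbit]

/-- Stabilizer of the ordered normal simplex `∇₁^{n-m-3}` of the first type.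
Here the paper's `m` is `K + 2` (so `m + 3 ≥ 5`) and `n > m + 3`; indices are
0-indexed, so the paper's `(1,...,m-1; m, m+1, m+2, s)`, `s = m+3,...,n`, becomes
`(0,...,K; K+1, K+2, K+3, t)` with `K + 4 ≤ t`.  A permutation `σ` fixes every
vertex `e_{(1,...,m-1);m,m+1,m+2,s}` (as a function on `ℰⁿ(ℂ^m, gp)`, via
`σ·e_{𝐢;j,k,r,s} = e_{σ𝐢;σj,σk,σr,σs}`) iff `σ ∈ S({1,...,m-1})`, i.e. `σ` fixes
`m, m+1, ..., n` pointwise. -/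
theorem stabilizer_nabla_one {n K : ℕ} (hn : K + 6 ≤ n) (σ : Equiv.Perm (Fin n)) :
    (∀ t : Fin n, K + 4 ≤ t.val →
      ∀ q : Fin n → Fin (K + 2) → ℂ, GenPos q →
        ecr q (fun r : Fin (K + 1) => σ (Fin.castLE (by omega) r))
            (σ ⟨K + 1, by omega⟩) (σ ⟨K + 2, by omega⟩) (σ ⟨K + 3, by omega⟩) (σ t)
          = ecr q (fun r : Fin (K + 1) => Fin.castLE (by omega) r)
            ⟨K + 1, by omega⟩ ⟨K + 2, by omega⟩ ⟨K + 3, by omega⟩ t) ↔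
      (∀ a : Fin n, K + 1 ≤ a.val → σ a = a) := by
  refine (stabilizer_nabla_one_general (nontrivial_setOf_le_val hn)
    (fun t => admissible_castLE (by omega)) σ).trans ?_
  rw [union_setOf_le_val_eq_compl_range_castLE (M := K + 1) (by omega),
    and_iff_right_of_imp image_eq_of_forall_compl_fixed]
  simp [Fin.range_castLE]
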